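/- For every integer n ≥ 1 there exists an uncountable family of infinite discrete subsets of ℂⁿ that are pairwise inequivalent, i.e. an uncountable index set I and infinite discrete subsets D_i ⊆ ℂⁿ for i ∈ I such that for all i ≠ j in I there is no automorphism φ of ℂⁿ with φ(D_i) = D_j. -/

import Mathlib

/-!
Given countably many discrete sets `A₀, A₁, …`, we build a discrete set `D` equivalent to none of
them, so no countable family exhausts the equivalence classes. In the shell `k ≤ ‖w‖ ≤ k + 1` the
set `D` is made so dense that each ball of radius `ε k` centred there contains more points of `D`
than any of `A₀, …, Aₖ` has in the ball of radius `(k + 1) ^ 2 + 1` about `0`.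

The radii `ε k` must serve all automorphisms `f` at once. Let `z` be a point closest to `0` with
`‖f z‖ ≥ k`; for infinitely many `k` the bound `‖f‖ < k + 1` persists on the ball of radius
`‖z‖ + 2⁻ᵏ`, since the distances `‖z‖` tend to infinity whereas `∑ 2⁻ᵏ` converges. Cauchy's estimate
then gives `‖z‖ ≤ (k + 1) ^ 2`. The Jacobian determinant has no zeros, so Harnack's inequality
bounds it away from `0` at `z`, and a quantitative inverse function theorem yields an `ε k`,
independent of `f`, such that the image of the ball of radius `(k + 1) ^ 2 + 1` contains the ball of
radius `ε k` about `f z`. If `f` mapped some `Aᵢ` onto `D`, counting points in that ball for `k ≥ i`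
would contradict injectivity.
-/

open Metric Set Filter Topology

section Cauchy

theorem mapsTo_ball_closedBall_of_norm_le {X F : Type*} [PseudoMetricSpace X]
    [SeminormedAddCommGroup F] {f : X → F} {c : X} {r B : ℝ} (hB : ∀ z ∈ ball c r, ‖f z‖ ≤ B) :
    MapsTo f (ball c r) (closedBall (f c) (2 * B)) := by
  intro z hz
  have hc : c ∈ ball c r := mem_ball_self (nonempty_ball.mp ⟨z, hz⟩)
  rw [mem_closedBall, dist_eq_norm]
  linarith [norm_sub_le (f z) (f c), hB z hz, hB c hc]

variable {E F : Type*} [NormedAddCommGroup E] [NormedSpace ℂ E] [NormedAddCommGroup F]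
  [NormedSpace ℂ F] {f : E → F} {c : E} {r B : ℝ}

theorem norm_fderiv_le_of_norm_le_on_ball (hf : DifferentiableOn ℂ f (ball c r)) (hr : 0 < r)
    (hB : ∀ z ∈ ball c r, ‖f z‖ ≤ B) : ‖fderiv ℂ f c‖ ≤ 2 * B / r :=
  Complex.norm_fderiv_le_div_of_mapsTo_ball hf (mapsTo_ball_closedBall_of_norm_le hB) hr

theorem radius_le_of_norm_le_on_ball (hf : DifferentiableOn ℂ f (ball c r)) (hB0 : 0 ≤ B)
    (hB : ∀ z ∈ ball c r, ‖f z‖ ≤ B) (hne : fderiv ℂ f c ≠ 0) : r ≤ 2 * B / ‖fderiv ℂ f c‖ := by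
  obtain hr | hr := le_or_gt r 0
  · exact hr.trans (by positivity)
  · exact (le_div_comm₀ (norm_pos_iff.mpr hne) hr).mp (norm_fderiv_le_of_norm_le_on_ball hf hr hB)

theorem norm_taylor_remainder_le (hf : DifferentiableOn ℂ f (ball c r))
    (hB : ∀ z ∈ ball c r, ‖f z‖ ≤ B) {w : E} (hw : w ∈ ball c r) :
    ‖f w - f c - fderiv ℂ f c (w - c)‖ ≤ 4 * B * (‖w - c‖ / r) ^ 2 := by
  have hr : 0 < r := nonempty_ball.mp ⟨w, hw⟩
  set A := fderiv ℂ f c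
  have hdiff (z : E) : f z - A z - (f c - A c) = f z - f c - A (z - c) := by rw [map_sub]; abel
  have hmaps : MapsTo (fun z => f z - A z) (ball c r) (closedBall (f c - A c) (4 * B)) := by
    intro z hz
    have hA : ‖A (z - c)‖ ≤ 2 * B :=
      calc ‖A (z - c)‖ ≤ 2 * B / r * r :=
            A.le_of_opNorm_le_of_le (norm_fderiv_le_of_norm_le_on_ball hf hr hB)
              (mem_ball_iff_norm.mp hz).le
        _ = 2 * B := div_mul_cancel₀ _ hr.ne'
    have hfz := mapsTo_ball_closedBall_of_norm_le hB hz
    rw [mem_closedBall, dist_eq_norm] at hfz ⊢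
    rw [hdiff]
    linarith [norm_sub_le (f z - f c) (A (z - c))]
  have hlittle : (fun z => f z - A z - (f c - A c)) =o[𝓝 c] fun z => ‖z - c‖ ^ 1 := by
    simp only [hdiff, pow_one]
    exact (hf.differentiableAt (ball_mem_nhds c hr)).hasFDerivAt.isLittleO.norm_right
  have hschwarz := Complex.dist_le_mul_div_pow_of_mapsTo_ball_of_isLittleO
    (hf.sub A.differentiable.differentiableOn) hmaps hlittle hw
  rwa [dist_eq_norm, dist_eq_norm, Pi.sub_apply, Pi.sub_apply, hdiff] at hschwarz

-- Cauchy's estimate on `ball x ‖x - c‖` for the Taylor remainder of `f` at `c`, whose derivative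
-- at `x` is the difference of the two derivatives.
theorem norm_fderiv_sub_fderiv_le (hf : DifferentiableOn ℂ f (ball c r))
    (hB : ∀ z ∈ ball c r, ‖f z‖ ≤ B) {x : E} (hx : 2 * ‖x - c‖ ≤ r) :
    ‖fderiv ℂ f x - fderiv ℂ f c‖ ≤ 32 * B / r ^ 2 * ‖x - c‖ := by
  obtain hxc | hxc := (norm_nonneg (x - c)).eq_or_lt
  · simp [sub_eq_zero.mp (norm_eq_zero.mp hxc.symm)]
  set δ := ‖x - c‖
  set A := fderiv ℂ f c
  have hdiffAt : DifferentiableAt ℂ f x :=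
    hf.differentiableAt (isOpen_ball.mem_nhds (by rw [mem_ball_iff_norm]; linarith))
  have hnear : ∀ z ∈ ball x δ, ‖z - c‖ < 2 * δ := fun z hz => by
    rw [← sub_add_sub_cancel z x c]
    linarith [norm_add_le (z - x) (x - c), mem_ball_iff_norm.mp hz]
  have hsub : ball x δ ⊆ ball c r := fun z hz => by
    rw [mem_ball_iff_norm]
    linarith [hnear z hz]
  have hB0 : 0 ≤ B := (norm_nonneg _).trans (hB x (hsub (mem_ball_self hxc)))
  have hremainder : ∀ z ∈ ball x δ, ‖f z - f c - A (z - c)‖ ≤ 4 * B * (2 * δ / r) ^ 2 :=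
    fun z hz => (norm_taylor_remainder_le hf hB (hsub hz)).trans <| by
      have hr : 0 < r := by linarith
      gcongr
      exact (hnear z hz).le
  have hfderiv : fderiv ℂ (fun z => f z - f c - A (z - c)) x = fderiv ℂ f x - A := by
    have hA : HasFDerivAt (fun z => A (z - c)) A x :=
      A.hasFDerivAt.comp x ((hasFDerivAt_id x).sub_const c)
    exact ((hdiffAt.hasFDerivAt.sub_const (f c)).sub hA).fderiv
  calc ‖fderiv ℂ f x - A‖ ≤ 2 * (4 * B * (2 * δ / r) ^ 2) / δ := by
        rw [← hfderiv]
        refine norm_fderiv_le_of_norm_le_on_ball ?_ hxc hremainder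
        exact ((hf.mono hsub).sub_const _).sub
          (A.differentiable.comp (by fun_prop)).differentiableOn
    _ = 32 * B / r ^ 2 * δ := by field_simp; ring

theorem approximatesLinearOn_fderiv_closedBall (hf : DifferentiableOn ℂ f (ball c r))
    (hB : ∀ z ∈ ball c r, ‖f z‖ ≤ B) {ρ : ℝ} (hρ : 0 < ρ) (hρr : 2 * ρ ≤ r) {K : NNReal}
    (hK : 32 * B / r ^ 2 * ρ ≤ K) : ApproximatesLinearOn f (fderiv ℂ f c) (closedBall c ρ) K := by
  intro x hx y hy
  have hB0 : 0 ≤ B := (norm_nonneg _).trans (hB c (mem_ball_self (by linarith)))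
  refine (convex_closedBall c ρ).norm_image_sub_le_of_norm_fderiv_le' (fun z hz => ?_)
    (fun z hz => ?_) hy hx
  · exact hf.differentiableAt (isOpen_ball.mem_nhds
      (mem_ball.mpr (by linarith [mem_closedBall.mp hz])))
  · rw [mem_closedBall_iff_norm] at hz
    calc ‖fderiv ℂ f z - fderiv ℂ f c‖ ≤ 32 * B / r ^ 2 * ‖z - c‖ :=
          norm_fderiv_sub_fderiv_le hf hB (by linarith)
      _ ≤ 32 * B / r ^ 2 * ρ := by gcongr
      _ ≤ K := hK

end Cauchy

section UniformLimit

variable {ι E F : Type*} [NormedAddCommGroup E] [NormedSpace ℂ E] [NormedAddCommGroup F]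
  [NormedSpace ℂ F] {l : Filter ι} {G : ι → E → F}

theorem uniformCauchySeqOn_fderiv_ball {c : E} {r : ℝ} (hr : 0 < r)
    (hG : ∀ᶠ i in l, DifferentiableOn ℂ (G i) (ball c (2 * r)))
    (hcauchy : UniformCauchySeqOn G l (ball c (2 * r))) :
    UniformCauchySeqOn (fun i => fderiv ℂ (G i)) l (ball c r) := by
  intro u hu
  obtain ⟨ε, hε, hεu⟩ := mem_uniformity_dist.mp hu
  filter_upwards [hcauchy _ (dist_mem_uniformity (show 0 < ε * r / 4 by positivity)),
    hG.prod_mk hG] with ⟨i, j⟩ hij ⟨hi, hj⟩ z hz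
  have hsub : ball z r ⊆ ball c (2 * r) := ball_subset_ball' (by linarith [mem_ball.mp hz])
  have hzc : ball c (2 * r) ∈ 𝓝 z := mem_of_superset (ball_mem_nhds z hr) hsub
  apply hεu
  calc dist (fderiv ℂ (G i) z) (fderiv ℂ (G j) z)
      = ‖fderiv ℂ (G i - G j) z‖ := by
        rw [dist_eq_norm, fderiv_sub (hi.differentiableAt hzc) (hj.differentiableAt hzc)]
    _ ≤ 2 * (ε * r / 4) / r :=
        norm_fderiv_le_of_norm_le_on_ball ((hi.sub hj).mono hsub) hr fun w hw => by
          simpa [dist_eq_norm] using (hij w (hsub hw)).le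
    _ < ε := by field_simp; linarith

theorem differentiableOn_of_tendstoUniformlyOn [CompleteSpace F] [l.NeBot] {g : E → F} {U : Set E}
    (hU : IsOpen U) (hG : ∀ᶠ i in l, DifferentiableOn ℂ (G i) U)
    (hlim : TendstoUniformlyOn G g l U) : DifferentiableOn ℂ g U := by
  intro x hx
  obtain ⟨R, hR, hRU⟩ := Metric.isOpen_iff.mp hU x hx
  have hball : ball x (2 * (R / 2)) ⊆ U := by rwa [mul_div_cancel₀ R two_ne_zero]
  have hcauchy := uniformCauchySeqOn_fderiv_ball (half_pos hR) (hG.mono fun _ h => h.mono hball)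
    (hlim.mono hball).uniformCauchySeqOn
  have hpointwise (z : E) (hz : z ∈ ball x (R / 2)) :
      ∃ A, Tendsto (fun i => fderiv ℂ (G i) z) l (𝓝 A) :=
    cauchy_map_iff_exists_tendsto.mp (hcauchy.cauchy_map hz)
  choose! g' hg' using hpointwise
  have hnhds : ball x (R / 2) ∈ 𝓝 x := ball_mem_nhds x (half_pos hR)
  have hderiv : HasFDerivAt g (g' x) x := by
    refine hasFDerivAt_of_tendstoUniformlyOnFilter (l := l) (f := G) (g' := g')
      (f' := fun i => fderiv ℂ (G i)) ?_ ?_ ?_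
    · exact (hcauchy.tendstoUniformlyOn_of_tendsto hg').tendstoUniformlyOnFilter.mono_right
        (le_principal_iff.mpr hnhds)
    · filter_upwards [hG.prod_mk (hU.mem_nhds hx)] with ⟨i, z⟩ ⟨hi, hz⟩
      exact (hi.differentiableAt (hU.mem_nhds hz)).hasFDerivAt
    · filter_upwards [hU.mem_nhds hx] with z hz using hlim.tendsto_at hz
  exact hderiv.differentiableAt.differentiableWithinAt

end UniformLimit

section FDeriv

theorem differentiableOn_clm_of_apply {𝕜 D E F : Type*} [NontriviallyNormedField 𝕜]
    [CompleteSpace 𝕜] [NormedAddCommGroup D] [NormedSpace 𝕜 D] [NormedAddCommGroup E]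
    [NormedSpace 𝕜 E] [FiniteDimensional 𝕜 E] [NormedAddCommGroup F] [NormedSpace 𝕜 F]
    {A : D → E →L[𝕜] F} {U : Set D} (hA : ∀ v, DifferentiableOn 𝕜 (fun x => A x v) U) :
    DifferentiableOn 𝕜 A U := by
  let e₁ : E ≃L[𝕜] (Fin (Module.finrank 𝕜 E) → 𝕜) :=
    ContinuousLinearEquiv.ofFinrankEq (Module.finrank_fin_fun 𝕜).symm
  let e₂ := (e₁.arrowCongr (1 : F ≃L[𝕜] F)).trans (ContinuousLinearEquiv.piRing _)
  exact e₂.comp_differentiableOn_iff.mp (differentiableOn_pi.mpr fun _ => hA _)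

variable {E F : Type*} [NormedAddCommGroup E] [NormedSpace ℂ E] [NormedAddCommGroup F]
  [NormedSpace ℂ F] {f : E → F} {U : Set E}

theorem norm_slope_sub_fderiv_le {c v : E} {r B : ℝ} (hf : DifferentiableOn ℂ f (ball c r))
    (hB : ∀ z ∈ ball c r, ‖f z‖ ≤ B) {t : ℂ} (ht : t ≠ 0) (htv : ‖t • v‖ < r) :
    ‖t⁻¹ • (f (c + t • v) - f c) - fderiv ℂ f c v‖ ≤ 4 * B * (‖v‖ / r) ^ 2 * ‖t‖ := by
  have htaylor := norm_taylor_remainder_le hf hB (w := c + t • v) (by simpa using htv)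
  rw [add_sub_cancel_left] at htaylor
  calc ‖t⁻¹ • (f (c + t • v) - f c) - fderiv ℂ f c v‖
      = ‖t⁻¹ • (f (c + t • v) - f c - fderiv ℂ f c (t • v))‖ := by
        rw [map_smul, smul_sub _ _ (t • _), inv_smul_smul₀ ht]
    _ ≤ ‖t‖⁻¹ * (4 * B * (‖t • v‖ / r) ^ 2) := by
        rw [norm_smul, norm_inv]
        gcongr
    _ = 4 * B * (‖v‖ / r) ^ 2 * ‖t‖ := by
        rw [norm_smul]
        field_simp

theorem eventually_norm_smul_lt (v : E) {r : ℝ} (hr : 0 < r) :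
    ∀ᶠ t : ℂ in 𝓝[≠] 0, ‖t • v‖ < r := by
  have hlim : Tendsto (fun t : ℂ => ‖t • v‖) (𝓝 0) (𝓝 0) :=
    Continuous.tendsto' (by fun_prop) 0 0 (by simp)
  exact eventually_nhdsWithin_of_eventually_nhds (hlim.eventually_lt_const hr)

theorem tendstoUniformlyOn_slope_fderiv {c : E} {r B : ℝ} (hr : 0 < r)
    (hf : DifferentiableOn ℂ f (ball c (2 * r))) (hB : ∀ z ∈ ball c (2 * r), ‖f z‖ ≤ B) (v : E) :
    TendstoUniformlyOn (fun (t : ℂ) z => t⁻¹ • (f (z + t • v) - f z)) (fun z => fderiv ℂ f z v)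
      (𝓝[≠] 0) (ball c r) := by
  have herror : Tendsto (fun t : ℂ => 4 * B * (‖v‖ / r) ^ 2 * ‖t‖) (𝓝[≠] 0) (𝓝 0) :=
    tendsto_nhdsWithin_of_tendsto_nhds (Continuous.tendsto' (by fun_prop) 0 0 (by simp))
  rw [Metric.tendstoUniformlyOn_iff]
  intro ε hε
  filter_upwards [herror.eventually_lt_const hε, eventually_norm_smul_lt v hr,
    self_mem_nhdsWithin] with t htε htv ht z hz
  have hsub : ball z r ⊆ ball c (2 * r) := ball_subset_ball' (by linarith [mem_ball.mp hz])
  rw [dist_comm, dist_eq_norm]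
  exact (norm_slope_sub_fderiv_le (hf.mono hsub) (fun w hw => hB w (hsub hw)) ht htv).trans_lt htε

theorem differentiableOn_fderiv_apply [CompleteSpace F] (hU : IsOpen U)
    (hf : DifferentiableOn ℂ f U) (v : E) : DifferentiableOn ℂ (fun z => fderiv ℂ f z v) U := by
  intro x hx
  obtain ⟨R, hR, hB⟩ : ∃ R > 0, ∀ z ∈ ball x R, z ∈ U ∧ ‖f z‖ ≤ ‖f x‖ + 1 := by
    have hbdd : ∀ᶠ z in 𝓝 x, ‖f z‖ < ‖f x‖ + 1 :=
      (hf.continuousOn.continuousAt (hU.mem_nhds hx)).norm.eventually_lt_const (lt_add_one _)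
    obtain ⟨R, hR, h⟩ := Metric.eventually_nhds_iff_ball.mp ((hU.eventually_mem hx).and hbdd)
    exact ⟨R, hR, fun z hz => ⟨(h z hz).1, (h z hz).2.le⟩⟩
  obtain ⟨r, hr, rfl⟩ : ∃ r > 0, 2 * r = R := ⟨R / 2, half_pos hR, mul_div_cancel₀ R two_ne_zero⟩
  have hfr : DifferentiableOn ℂ f (ball x (2 * r)) := hf.mono fun z hz => (hB z hz).1
  have hslope : ∀ᶠ t : ℂ in 𝓝[≠] 0,
      DifferentiableOn ℂ (fun z => t⁻¹ • (f (z + t • v) - f z)) (ball x r) := by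
    filter_upwards [eventually_norm_smul_lt v hr] with t ht
    have hshift : MapsTo (fun z => z + t • v) (ball x r) (ball x (2 * r)) := fun z hz => by
      rw [mem_ball_iff_norm] at hz ⊢
      rw [add_sub_right_comm]
      linarith [norm_add_le (z - x) (t • v)]
    exact ((hfr.comp (by fun_prop) hshift).sub (hfr.mono (ball_subset_ball (by linarith))))
      |>.const_smul t⁻¹
  have hdiff := differentiableOn_of_tendstoUniformlyOn isOpen_ball hslope
    (tendstoUniformlyOn_slope_fderiv hr hfr (fun z hz => (hB z hz).2) v)
  exact (hdiff.differentiableAt (ball_mem_nhds x hr)).differentiableWithinAt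

theorem differentiableOn_fderiv [FiniteDimensional ℂ E] [CompleteSpace F] (hU : IsOpen U)
    (hf : DifferentiableOn ℂ f U) : DifferentiableOn ℂ (fderiv ℂ f) U :=
  differentiableOn_clm_of_apply (differentiableOn_fderiv_apply hU hf)

end FDeriv

section Determinant

variable {𝕜 E : Type*} [NontriviallyNormedField 𝕜] [CompleteSpace 𝕜] [NormedAddCommGroup E]
  [NormedSpace 𝕜 E] [FiniteDimensional 𝕜 E]

theorem contDiff_continuousLinearMap_det {n : WithTop ℕ∞} :
    ContDiff 𝕜 n (ContinuousLinearMap.det : (E →L[𝕜] E) → 𝕜) := by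
  let b := Module.finBasis 𝕜 E
  have hentry (i j) : ContDiff 𝕜 n fun A : E →L[𝕜] E => b.repr (A (b j)) i :=
    (LinearMap.toContinuousLinearMap (b.coord i)).contDiff.comp (by fun_prop)
  have hdet (A : E →L[𝕜] E) :
      A.det = ∑ σ : Equiv.Perm _, Equiv.Perm.sign σ • ∏ i, b.repr (A (b i)) (σ i) := by
    rw [ContinuousLinearMap.det, ← LinearMap.det_toMatrix b, Matrix.det_apply]
    simp only [LinearMap.toMatrix_apply, ContinuousLinearMap.coe_coe]
  simp only [funext hdet]
  exact .sum fun σ _ => .const_smul _ (contDiff_prod fun i _ => hentry _ _)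

end Determinant

section QuantitativeInverse

theorem exists_norm_symm_le_of_le_norm_det {𝕜 E : Type*} [NontriviallyNormedField 𝕜]
    [ProperSpace 𝕜] [NormedAddCommGroup E] [NormedSpace 𝕜 E] [FiniteDimensional 𝕜 E] (L : ℝ)
    {η : ℝ} (hη : 0 < η) :
    ∃ C > 0, ∀ A : E →L[𝕜] E, ‖A‖ ≤ L → η ≤ ‖A.det‖ →
      ∃ e : E ≃L[𝕜] E, (e : E →L[𝕜] E) = A ∧ ‖(e.symm : E →L[𝕜] E)‖ ≤ C := by
  have : ProperSpace (E →L[𝕜] E) := FiniteDimensional.proper 𝕜 _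
  have : CompleteSpace E := FiniteDimensional.complete 𝕜 E
  let 𝒦 : Set (E →L[𝕜] E) := closedBall 0 L ∩ {A | η ≤ ‖A.det‖}
  have hequiv (A : E →L[𝕜] E) (hA : η ≤ ‖A.det‖) : ∃ e : E ≃L[𝕜] E, (e : E →L[𝕜] E) = A :=
    ⟨A.toContinuousLinearEquivOfDetNeZero (norm_pos_iff.mp (hη.trans_le hA)), by ext; simp⟩
  have hcompact : IsCompact 𝒦 := (isCompact_closedBall _ _).inter_right
    (isClosed_le continuous_const ContinuousLinearMap.continuous_det.norm)
  have hcont : ContinuousOn Ring.inverse 𝒦 := by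
    rintro A ⟨-, hA⟩
    obtain ⟨e, rfl⟩ := hequiv A hA
    exact (NormedRing.inverse_continuousAt e.toUnit).continuousWithinAt
  obtain ⟨C, hC⟩ := hcompact.exists_bound_of_continuousOn hcont
  refine ⟨max C 1, by positivity, fun A hAL hA => ?_⟩
  obtain ⟨e, rfl⟩ := hequiv A hA
  have hinv : Ring.inverse (e : E →L[𝕜] E) = (e.symm : E →L[𝕜] E) := Ring.inverse_unit e.toUnit
  exact ⟨e, rfl, hinv ▸ le_max_of_le_left (hC e ⟨by simpa using hAL, hA⟩)⟩

theorem exists_closedBall_subset_image_ball {E : Type*} [NormedAddCommGroup E] [NormedSpace ℂ E]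
    [FiniteDimensional ℂ E] [Nontrivial E] {r B η : ℝ} (hr : 0 < r) (hB : 0 < B) (hη : 0 < η) :
    ∃ ε > 0, ∀ (f : E → E) (c : E), DifferentiableOn ℂ f (ball c r) →
      (∀ z ∈ ball c r, ‖f z‖ ≤ B) → η ≤ ‖(fderiv ℂ f c).det‖ →
        closedBall (f c) ε ⊆ f '' ball c r := by
  have : CompleteSpace E := FiniteDimensional.complete ℂ E
  obtain ⟨C, hC, hinv⟩ := exists_norm_symm_le_of_le_norm_det (𝕜 := ℂ) (E := E) (2 * B / r) hη
  let ρ : ℝ := min (r / 4) (r ^ 2 / (64 * B * C))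
  have hρ : 0 < ρ := by positivity
  have hρr : ρ ≤ r / 4 := min_le_left _ _
  have hρC : 32 * B / r ^ 2 * ρ ≤ (2 * C)⁻¹ :=
    calc 32 * B / r ^ 2 * ρ ≤ 32 * B / r ^ 2 * (r ^ 2 / (64 * B * C)) := by
          gcongr
          exact min_le_right _ _
      _ = (2 * C)⁻¹ := by field_simp; norm_num
  refine ⟨(2 * C)⁻¹ * ρ, by positivity, fun f c hf hfB hdet => ?_⟩
  obtain ⟨e, he, hesymm⟩ := hinv _ (norm_fderiv_le_of_norm_le_on_ball hf hr hfB) hdet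
  have happrox := approximatesLinearOn_fderiv_closedBall hf hfB hρ (by linarith)
    (K := ⟨(2 * C)⁻¹, by positivity⟩) hρC
  rw [← he] at happrox
  have hsurj := happrox.surjOn_closedBall_of_nonlinearRightInverse e.toNonlinearRightInverse hρ.le
    Subset.rfl
  have hradius : (2 * C)⁻¹ * ρ ≤ (‖(e.symm : E →L[ℂ] E)‖⁻¹ - (2 * C)⁻¹) * ρ := by
    gcongr
    calc (2 * C)⁻¹ = C⁻¹ - (2 * C)⁻¹ := by field_simp; norm_num
      _ ≤ ‖(e.symm : E →L[ℂ] E)‖⁻¹ - (2 * C)⁻¹ := by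
        gcongr
        exact e.norm_symm_pos
  exact (closedBall_subset_closedBall hradius).trans
    (hsurj.trans (image_mono (closedBall_subset_ball (by linarith))))

end QuantitativeInverse

section Harnack

theorem exists_eqOn_ball_mul_exp {h : ℂ → ℂ} {c : ℂ} {r : ℝ} (hh : DifferentiableOn ℂ h (ball c r))
    (hne : ∀ z ∈ ball c r, h z ≠ 0) :
    ∃ φ : ℂ → ℂ, DifferentiableOn ℂ φ (ball c r) ∧ φ c = 0 ∧
      ∀ z ∈ ball c r, h z = h c * Complex.exp (φ z) := by
  obtain ⟨φ, hφc, hφ⟩ :=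
    ((hh.deriv isOpen_ball).div hh hne).isExactOn_ball.with_val_at c 0
  refine ⟨φ, fun z hz => (hφ z hz).differentiableAt.differentiableWithinAt, hφc, fun z hz => ?_⟩
  have hconst : h z * Complex.exp (-φ z) = h c * Complex.exp (-φ c) := by
    have hderiv : ∀ w ∈ ball c r, HasDerivAt (fun w => h w * Complex.exp (-φ w)) 0 w :=
      fun w hw => by
        have hhw := (hh.differentiableAt (isOpen_ball.mem_nhds hw)).hasDerivAt
        refine (hhw.mul (hφ w hw).fun_neg.cexp).congr_deriv ?_
        rw [Pi.div_apply]
        field_simp [hne w hw]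
        ring
    exact isOpen_ball.is_const_of_deriv_eq_zero (convex_ball c r).isPreconnected
      (fun w hw => (hderiv w hw).differentiableAt.differentiableWithinAt)
      (fun w hw => (hderiv w hw).deriv) hz (mem_ball_self (nonempty_ball.mp ⟨z, hz⟩))
  rw [hφc, neg_zero, Complex.exp_zero, mul_one] at hconst
  rw [← hconst, mul_assoc, ← Complex.exp_add, neg_add_cancel, Complex.exp_zero, mul_one]

-- Harnack's inequality for the positive harmonic function `log (M / ‖h‖)`, exponentiated.
theorem norm_mul_rpow_le_norm_on_disc {h : ℂ → ℂ} {R M : ℝ}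
    (hh : DifferentiableOn ℂ h (ball 0 R)) (hne : ∀ z ∈ ball 0 R, h z ≠ 0)
    (hM : ∀ z ∈ ball 0 R, ‖h z‖ < M) {z : ℂ} (hz : z ∈ ball 0 R) :
    ‖h 0‖ * (‖h 0‖ / M) ^ (2 * ‖z‖ / (R - ‖z‖)) ≤ ‖h z‖ := by
  have hR : 0 < R := nonempty_ball.mp ⟨z, hz⟩
  have h0 : 0 < ‖h 0‖ := norm_pos_iff.mpr (hne 0 (mem_ball_self hR))
  have h0M : ‖h 0‖ < M := hM 0 (mem_ball_self hR)
  have hM0 : 0 < M := h0.trans h0M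
  obtain ⟨φ, hφ, hφ0, hexp⟩ := exists_eqOn_ball_mul_exp hh hne
  have hnorm : ∀ w ∈ ball 0 R, ‖h w‖ = ‖h 0‖ * Real.exp (φ w).re := fun w hw => by
    rw [hexp w hw, norm_mul, Complex.norm_exp]
  have hre : MapsTo φ (ball 0 R) {w | w.re ≤ Real.log (M / ‖h 0‖)} := fun w hw => by
    rw [mem_ofPred_eq, Real.le_log_iff_exp_le (by positivity), le_div_iff₀' h0, ← hnorm w hw]
    exact (hM w hw).le
  have hlog : 0 < Real.log (M / ‖h 0‖) := Real.log_pos ((one_lt_div h0).mpr h0M)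
  have hcaratheodory := Complex.borelCaratheodory_zero hlog hφ hre hR hz hφ0
  have hlog_inv : Real.log (‖h 0‖ / M) = -Real.log (M / ‖h 0‖) := by rw [← Real.log_inv, inv_div]
  rw [hnorm z hz, Real.rpow_def_of_pos (by positivity), hlog_inv]
  gcongr
  calc -Real.log (M / ‖h 0‖) * (2 * ‖z‖ / (R - ‖z‖))
      = -(2 * Real.log (M / ‖h 0‖) * ‖z‖ / (R - ‖z‖)) := by ring
    _ ≤ -‖φ z‖ := neg_le_neg hcaratheodory
    _ ≤ (φ z).re := (abs_le.mp (Complex.abs_re_le_norm (φ z))).1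

variable {E : Type*} [NormedAddCommGroup E] [NormedSpace ℂ E]

theorem norm_mul_rpow_le_norm_on_ball {h : E → ℂ} {c : E} {R M : ℝ}
    (hh : DifferentiableOn ℂ h (ball c R)) (hne : ∀ z ∈ ball c R, h z ≠ 0)
    (hM : ∀ z ∈ ball c R, ‖h z‖ < M) {z : E} (hz : z ∈ ball c R) :
    ‖h c‖ * (‖h c‖ / M) ^ (2 * ‖z - c‖ / (R - ‖z - c‖)) ≤ ‖h z‖ := by
  set u : E := ((‖z - c‖ : ℂ)⁻¹) • (z - c)
  have hu : ‖u‖ ≤ 1 := by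
    rw [norm_smul, norm_inv, Complex.norm_real, norm_norm]
    exact inv_mul_le_one
  have hzu : c + (‖z - c‖ : ℂ) • u = z := by
    obtain hzc | hzc := eq_or_ne z c
    · simp [hzc]
    · rw [smul_inv_smul₀ (by simpa [sub_eq_zero] using hzc), add_sub_cancel]
  have hline : MapsTo (fun t : ℂ => c + t • u) (ball 0 R) (ball c R) := fun t ht => by
    rw [mem_ball_iff_norm, add_sub_cancel_left, norm_smul]
    exact (mul_le_of_le_one_right (norm_nonneg t) hu).trans_lt (mem_ball_zero_iff.mp ht)
  have hharnack := norm_mul_rpow_le_norm_on_disc (hh.comp (by fun_prop) hline)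
    (fun t ht => hne _ (hline ht)) (fun t ht => hM _ (hline ht))
    (z := (‖z - c‖ : ℂ)) (by simpa using mem_ball_iff_norm.mp hz)
  simpa only [Function.comp_apply, zero_smul, add_zero, hzu, Complex.norm_real, norm_norm]
    using hharnack

end Harnack

section Jacobian

variable {E : Type*} [NormedAddCommGroup E] [NormedSpace ℂ E] [FiniteDimensional ℂ E]

theorem differentiableOn_det_fderiv {f : E → E} {U : Set E} (hU : IsOpen U)
    (hf : DifferentiableOn ℂ f U) : DifferentiableOn ℂ (fun z => (fderiv ℂ f z).det) U := by
  have : CompleteSpace E := FiniteDimensional.complete ℂ E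
  have hdet := (contDiff_continuousLinearMap_det (𝕜 := ℂ) (E := E)).differentiable one_ne_zero
    |>.comp_differentiableOn (differentiableOn_fderiv hU hf)
  exact hdet

theorem exists_pos_le_norm_det_fderiv {S B d η : ℝ} (hd : 0 < d) (hη : 0 < η) :
    ∃ η' > 0, ∀ (f : E → E) (c z : E), DifferentiableOn ℂ f (ball c (‖z - c‖ + d)) →
      (∀ w ∈ ball c (‖z - c‖ + d), (fderiv ℂ f w).det ≠ 0) → ‖z - c‖ ≤ S →
      (∀ w ∈ ball c (‖z - c‖ + d), ‖f w‖ ≤ B) → η ≤ ‖(fderiv ℂ f c).det‖ →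
        η' ≤ ‖(fderiv ℂ f z).det‖ := by
  have : CompleteSpace E := FiniteDimensional.complete ℂ E
  have : ProperSpace (E →L[ℂ] E) := FiniteDimensional.proper ℂ _
  obtain ⟨M, hM⟩ := (isCompact_closedBall (0 : E →L[ℂ] E) (2 * B / (d / 2)))
    |>.exists_bound_of_continuousOn ContinuousLinearMap.continuous_det.continuousOn
  let M' : ℝ := max (M + 1) 1
  refine ⟨η * (η / M') ^ (4 * S / d), by positivity, fun f c z hf hne hzS hB hdet => ?_⟩
  have hsub : ball c (‖z - c‖ + d / 2) ⊆ ball c (‖z - c‖ + d) := ball_subset_ball (by linarith)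
  have hdetM : ∀ w ∈ ball c (‖z - c‖ + d / 2), ‖(fderiv ℂ f w).det‖ < M' := fun w hw => by
    have hw' : ball w (d / 2) ⊆ ball c (‖z - c‖ + d) :=
      ball_subset_ball' (by linarith [mem_ball.mp hw])
    have hfderiv := norm_fderiv_le_of_norm_le_on_ball (hf.mono hw') (half_pos hd)
      fun y hy => hB y (hw' hy)
    exact (hM _ (by simpa using hfderiv)).trans_lt ((lt_add_one M).trans_le (le_max_left _ _))
  have hdiff : DifferentiableOn ℂ (fun w => (fderiv ℂ f w).det) (ball c (‖z - c‖ + d / 2)) :=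
    (differentiableOn_det_fderiv isOpen_ball hf).mono hsub
  have hc : c ∈ ball c (‖z - c‖ + d / 2) := mem_ball_self (by positivity)
  have hηM : η / M' ≤ 1 := (div_le_one (by positivity)).mpr (hdet.trans (hdetM c hc).le)
  calc η * (η / M') ^ (4 * S / d) ≤ η * (η / M') ^ (2 * ‖z - c‖ / (‖z - c‖ + d / 2 - ‖z - c‖)) := by
        gcongr η * ?_
        refine Real.rpow_le_rpow_of_exponent_ge (by positivity) hηM ?_
        rw [add_sub_cancel_left, div_le_div_iff₀ (by positivity) hd]
        nlinarith
    _ ≤ ‖(fderiv ℂ f c).det‖ *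
          (‖(fderiv ℂ f c).det‖ / M') ^ (2 * ‖z - c‖ / (‖z - c‖ + d / 2 - ‖z - c‖)) := by
        have : 0 ≤ 2 * ‖z - c‖ / (‖z - c‖ + d / 2 - ‖z - c‖) := by
          rw [add_sub_cancel_left]; positivity
        gcongr
    _ ≤ ‖(fderiv ℂ f z).det‖ :=
        norm_mul_rpow_le_norm_on_ball hdiff (fun w hw => hne w (hsub hw)) hdetM
          (by rw [mem_ball_iff_norm]; linarith)

theorem exists_closedBall_subset_image_ball_of_det_ne_zero [Nontrivial E] {S B d η : ℝ}
    (hB : 0 < B) (hd : 0 < d) (hη : 0 < η) :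
    ∃ ε > 0, ∀ (f : E → E) (c z : E), DifferentiableOn ℂ f (ball c (‖z - c‖ + d)) →
      (∀ w ∈ ball c (‖z - c‖ + d), (fderiv ℂ f w).det ≠ 0) → ‖z - c‖ ≤ S →
      (∀ w ∈ ball c (‖z - c‖ + d), ‖f w‖ ≤ B) → η ≤ ‖(fderiv ℂ f c).det‖ →
        closedBall (f z) ε ⊆ f '' ball c (‖z - c‖ + d) := by
  obtain ⟨η', hη', hdet'⟩ := exists_pos_le_norm_det_fderiv (E := E) (S := S) (B := B) hd hη
  obtain ⟨ε, hε, himage⟩ := exists_closedBall_subset_image_ball (E := E) hd hB hη'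
  refine ⟨ε, hε, fun f c z hf hne hzS hfB hdet => ?_⟩
  have hsub : ball z d ⊆ ball c (‖z - c‖ + d) := ball_subset_ball' (by rw [dist_eq_norm, add_comm])
  exact (himage f z (hf.mono hsub) (fun w hw => hfB w (hsub hw))
    (hdet' f c z hf hne hzS hfB hdet)).trans (image_mono hsub)

end Jacobian

section Growth

theorem frequently_add_le_succ_of_tendsto_atTop {ρ ε : ℕ → ℝ} (hρ : Tendsto ρ atTop atTop)
    (hε : Summable ε) : ∃ᶠ k in atTop, ρ k + ε k ≤ ρ (k + 1) := by
  intro hlt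
  simp only [not_le] at hlt
  obtain ⟨m, hm⟩ := eventually_atTop.mp hlt
  let u : ℕ → ℝ := fun k => ρ k - ∑ i ∈ Finset.range k, ε i
  have hu : Tendsto u atTop atTop := hρ.atTop_add hε.hasSum.tendsto_sum_nat.neg
  have hstep : ∀ k ≥ m, u (k + 1) ≤ u k := fun k hk => by
    simp only [u, Finset.sum_range_succ]
    linarith [hm k hk]
  have hbound : ∀ k ≥ m, u k ≤ u m := fun k hk => by
    induction k, hk using Nat.le_induction with
    | base => rfl
    | succ k hk ih => exact (hstep k hk).trans ih
  obtain ⟨k, hmk, hk⟩ := ((eventually_ge_atTop m).and (hu.eventually_gt_atTop (u m))).exists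
  exact (hbound k hmk).not_gt hk

variable {X : Type*} [PseudoMetricSpace X] [ProperSpace X] {φ : X → ℝ}

theorem exists_le_forall_mem_ball_lt (hφ : Continuous φ) (x₀ : X) {r : ℝ} (hr : ∃ z, r ≤ φ z) :
    ∃ z, r ≤ φ z ∧ ∀ w ∈ ball x₀ (dist z x₀), φ w < r := by
  obtain ⟨z, hz, hdist⟩ := (isClosed_le continuous_const hφ).exists_infDist_eq_dist hr x₀
  refine ⟨z, hz, fun w hw => lt_of_not_ge fun hrw => ?_⟩
  have hle : infDist x₀ {w | r ≤ φ w} ≤ dist x₀ w := infDist_le_dist_of_mem hrw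
  rw [hdist, dist_comm, dist_comm x₀] at hle
  exact hle.not_gt (mem_ball.mp hw)

theorem frequently_exists_gap (hφ : Continuous φ) (hunbdd : ∀ r, ∃ z, r ≤ φ z) (x₀ : X) {ε : ℕ → ℝ}
    (hε : Summable ε) :
    ∃ᶠ k : ℕ in atTop, ∃ z, k ≤ φ z ∧ (∀ w ∈ ball x₀ (dist z x₀), φ w < k) ∧
      ∀ w ∈ ball x₀ (dist z x₀ + ε k), φ w < k + 1 := by
  choose z hz hexit using fun k : ℕ => exists_le_forall_mem_ball_lt hφ x₀ (hunbdd k)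
  have hdist : Tendsto (fun k => dist (z k) x₀) atTop atTop := by
    refine tendsto_atTop.mpr fun R => ?_
    obtain ⟨C, hC⟩ := (isCompact_closedBall x₀ R).bddAbove_image hφ.continuousOn
    filter_upwards [tendsto_natCast_atTop_atTop.eventually_gt_atTop C] with k hk
    by_contra! hlt
    exact (hk.trans_le (hz k)).not_ge (hC (mem_image_of_mem φ hlt.le))
  refine (frequently_add_le_succ_of_tendsto_atTop hdist hε).mono fun k hk => ?_
  refine ⟨z k, hz k, hexit k, fun w hw => ?_⟩
  exact_mod_cast hexit (k + 1) w (ball_subset_ball hk hw)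

end Growth

section UniversalRadii

variable {E : Type*} [NormedAddCommGroup E] [NormedSpace ℂ E] [FiniteDimensional ℂ E] [Nontrivial E]

theorem fderiv_ne_zero_of_det_ne_zero {f : E → E} {z : E} (hdet : (fderiv ℂ f z).det ≠ 0) :
    fderiv ℂ f z ≠ 0 := by
  intro hzero
  rw [hzero, ContinuousLinearMap.det, ContinuousLinearMap.toLinearMap_zero, LinearMap.det_zero,
    zero_pow Module.finrank_pos.ne'] at hdet
  exact hdet rfl

theorem exists_le_norm_of_det_fderiv_ne_zero {f : E → E} (hf : Differentiable ℂ f) {z : E}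
    (hdet : (fderiv ℂ f z).det ≠ 0) (r : ℝ) : ∃ w, r ≤ ‖f w‖ := by
  by_contra! hlt
  have hbdd : Bornology.IsBounded (range f) :=
    isBounded_iff_forall_norm_le.mpr ⟨r, forall_mem_range.mpr fun w => (hlt w).le⟩
  have hconst : f = fun _ => f z := funext fun w => hf.apply_eq_apply_of_bounded hbdd w z
  refine fderiv_ne_zero_of_det_ne_zero hdet ?_
  rw [hconst, fderiv_fun_const, Pi.zero_apply]

variable (E) in
theorem exists_radii_closedBall_subset_image :
    ∃ ε : ℕ → ℝ, (∀ k, 0 < ε k) ∧ ∀ f : E → E, Differentiable ℂ f →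
      (∀ z, (fderiv ℂ f z).det ≠ 0) →
        ∃ᶠ k : ℕ in atTop, ∃ w, k ≤ ‖w‖ ∧ ‖w‖ ≤ k + 1 ∧
          closedBall w (ε k) ⊆ f '' ball 0 ((k + 1) ^ 2 + 1) := by
  have : ProperSpace E := FiniteDimensional.proper ℂ E
  choose ε hε himage using fun k : ℕ =>
    exists_closedBall_subset_image_ball_of_det_ne_zero (E := E) (S := (k + 1) ^ 2) (B := k + 1)
      (d := (1 / 2) ^ k) (η := 1 / (k + 1)) (by positivity) (by positivity) (by positivity)
  refine ⟨ε, hε, fun f hf hdet => ?_⟩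
  have hdet0 : 0 < ‖(fderiv ℂ f 0).det‖ := norm_pos_iff.mpr (hdet 0)
  have hlarge := (tendsto_natCast_atTop_atTop (R := ℝ)).eventually_ge_atTop
  refine ((frequently_exists_gap hf.continuous.norm
    (exists_le_norm_of_det_fderiv_ne_zero hf (hdet 0)) 0 summable_geometric_two).and_eventually
      ((hlarge (1 / ‖(fderiv ℂ f 0).det‖)).and (hlarge (2 / ‖fderiv ℂ f 0‖)))).mono ?_
  rintro k ⟨⟨z, hkz, hexit, hgap⟩, hkdet, hkfderiv⟩
  rw [dist_zero_right] at hexit hgap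
  have hzS : ‖z‖ ≤ (k + 1) ^ 2 :=
    calc ‖z‖ ≤ 2 * k / ‖fderiv ℂ f 0‖ :=
          radius_le_of_norm_le_on_ball hf.differentiableOn k.cast_nonneg
            (fun w hw => (hexit w hw).le) (fderiv_ne_zero_of_det_ne_zero (hdet 0))
      _ = k * (2 / ‖fderiv ℂ f 0‖) := by ring
      _ ≤ k * k := by gcongr
      _ ≤ (k + 1) ^ 2 := by nlinarith [k.cast_nonneg (α := ℝ)]
  have hη : 1 / ((k : ℝ) + 1) ≤ ‖(fderiv ℂ f 0).det‖ :=
    (one_div_le (by positivity) hdet0).mpr (by linarith)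
  have hd : (0 : ℝ) < (1 / 2) ^ k := by positivity
  have hd1 : ((1 : ℝ) / 2) ^ k ≤ 1 := pow_le_one₀ (by norm_num) (by norm_num)
  refine ⟨f z, hkz, (hgap z (by rw [mem_ball_zero_iff]; linarith)).le, ?_⟩
  refine (himage k f 0 z hf.differentiableOn (fun w _ => hdet w) ?_ ?_ hη).trans (image_mono ?_)
  · simpa using hzS
  · simpa using fun w hw => (hgap w (mem_ball_zero_iff.mpr hw)).le
  · rw [sub_zero]
    exact ball_subset_ball (by linarith)

end UniversalRadii

section DiscreteSets

variable {X : Type*} [MetricSpace X]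

theorem isClosed_and_discreteTopology_iff_finite_inter_closedBall [ProperSpace X] {D : Set X}
    (x₀ : X) : IsClosed D ∧ DiscreteTopology D ↔ ∀ R, (D ∩ closedBall x₀ R).Finite := by
  rw [← isDiscrete_iff_discreteTopology]
  constructor
  · rintro ⟨hclosed, hdiscrete⟩ R
    exact ((isCompact_closedBall x₀ R).inter_left hclosed).finite (hdiscrete.mono inter_subset_left)
  · intro hfin
    rw [isClosed_and_discrete_iff]
    intro x
    have hnear : ((D ∩ closedBall x₀ (dist x x₀ + 1)) \ {x})ᶜ ∈ 𝓝 x :=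
      (hfin _).sdiff.isClosed.isOpen_compl.mem_nhds (by simp)
    rw [disjoint_principal_right]
    filter_upwards [mem_nhdsWithin_of_mem_nhds hnear,
      mem_nhdsWithin_of_mem_nhds (ball_mem_nhds x one_pos),
      self_mem_nhdsWithin] with y hy hyx hne hyD
    refine hy ⟨⟨hyD, mem_closedBall.mpr ?_⟩, hne⟩
    linarith [dist_triangle y x x₀, mem_ball.mp hyx]

variable [∀ x : X, (𝓝[≠] x).NeBot]

theorem exists_finset_subset_thickening_le_ncard {K : Set X} (hK : IsCompact K) {ε : ℝ} (hε : 0 < ε)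
    (N : ℕ) : ∃ T : Finset X, (T : Set X) ⊆ thickening ε K ∧
      ∀ w ∈ K, N ≤ ((T : Set X) ∩ closedBall w ε).ncard := by
  classical
  have hcluster (x : X) : ∃ U : Finset X, (U : Set X) ⊆ ball x (ε / 2) ∧ U.card = N :=
    (infinite_of_mem_nhds x (ball_mem_nhds x (half_pos hε))).exists_subset_card_eq N
  choose U hU hUN using hcluster
  obtain ⟨P, hPK, hPfin, hP⟩ := hK.finite_cover_balls (half_pos hε)
  lift P to Finset X using hPfin
  refine ⟨P.biUnion U, fun y hy => ?_, fun w hw => ?_⟩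
  · obtain ⟨x, hx, hyx⟩ := Finset.mem_biUnion.mp hy
    exact mem_thickening_iff.mpr ⟨x, hPK hx, (mem_ball.mp (hU x hyx)).trans (half_lt_self hε)⟩
  · obtain ⟨x, hx, hwx⟩ := mem_iUnion₂.mp (hP hw)
    have hsub : (U x : Set X) ⊆ ↑(P.biUnion U) ∩ closedBall w ε := fun y hy => by
      refine ⟨Finset.subset_biUnion_of_mem U hx hy, mem_closedBall.mpr ?_⟩
      linarith [dist_triangle y x w, mem_ball.mp (hU x hy), mem_ball'.mp hwx]
    calc N = (U x : Set X).ncard := by rw [ncard_coe_finset, hUN]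
      _ ≤ _ := ncard_le_ncard hsub ((P.biUnion U).finite_toSet.inter_of_left _)

theorem exists_discrete_forall_le_ncard_inter_closedBall [ProperSpace X] (x₀ : X) {ε : ℕ → ℝ}
    (hε : ∀ k, 0 < ε k) (N : ℕ → ℕ) :
    ∃ D : Set X, (IsClosed D ∧ DiscreteTopology D) ∧ ∀ (k : ℕ) (w : X), k ≤ dist w x₀ →
      dist w x₀ ≤ k + 1 → N k ≤ (D ∩ closedBall w (ε k)).ncard := by
  let shell : ℕ → Set X := fun k => closedBall x₀ (k + 1) ∩ {w | k ≤ dist w x₀}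
  have hshell (k : ℕ) : IsCompact (shell k) := (isCompact_closedBall x₀ _).inter_right
    (isClosed_le continuous_const (continuous_id.dist continuous_const))
  choose T hTshell hTcard using fun k =>
    exists_finset_subset_thickening_le_ncard (hshell k) (lt_min (hε k) one_pos) (N k)
  let D : Set X := ⋃ k, (T k : Set X)
  have hfar (k : ℕ) : ∀ y ∈ T k, k - 1 < dist y x₀ := fun y hy => by
    obtain ⟨w, ⟨-, hw⟩, hyw⟩ := mem_thickening_iff.mp (hTshell k hy)
    have hw' : (k : ℝ) ≤ dist w x₀ := hw
    linarith [dist_triangle_left w x₀ y, min_le_right (ε k) 1]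
  have hfin (R : ℝ) : (D ∩ closedBall x₀ R).Finite := by
    obtain ⟨m, hm⟩ := exists_nat_gt (R + 1)
    refine ((finite_lt_nat m).biUnion fun k _ => (T k).finite_toSet).subset ?_
    rintro y ⟨hyD, hyR⟩
    obtain ⟨k, hk⟩ := mem_iUnion.mp hyD
    refine mem_biUnion (?_ : k < m) hk
    exact_mod_cast (by linarith [hfar k y hk, mem_closedBall.mp hyR] : (k : ℝ) < m)
  have hclosed := (isClosed_and_discreteTopology_iff_finite_inter_closedBall x₀).mpr hfin
  refine ⟨D, hclosed, fun k w hkw hwk => (hTcard k w ⟨hwk, hkw⟩).trans ?_⟩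
  refine ncard_le_ncard ?_
    ((isClosed_and_discreteTopology_iff_finite_inter_closedBall w).mp hclosed (ε k))
  exact inter_subset_inter (subset_iUnion (fun k => (T k : Set X)) k)
    (closedBall_subset_closedBall (min_le_left _ _))

end DiscreteSets

section Equivalence

theorem ncard_image_inter_le {α β : Type*} {f : α → β} (hf : Function.Injective f) {A U : Set α}
    {V : Set β} (hfin : (A ∩ U).Finite) (hV : V ⊆ f '' U) :
    (f '' A ∩ V).ncard ≤ (A ∩ U).ncard :=
  calc (f '' A ∩ V).ncard ≤ (f '' (A ∩ U)).ncard := by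
        refine ncard_le_ncard ?_ (hfin.image f)
        rw [image_inter hf]
        exact inter_subset_inter_right _ hV
    _ ≤ (A ∩ U).ncard := ncard_image_le hfin

theorem det_fderiv_ne_zero_of_leftInverse {𝕜 E : Type*} [NontriviallyNormedField 𝕜]
    [NormedAddCommGroup E] [NormedSpace 𝕜 E] {f g : E → E} (hf : Differentiable 𝕜 f)
    (hg : Differentiable 𝕜 g) (hgf : Function.LeftInverse g f) (z : E) :
    (fderiv 𝕜 f z).det ≠ 0 := by
  have hcomp : (fderiv 𝕜 g (f z)).comp (fderiv 𝕜 f z) = ContinuousLinearMap.id 𝕜 E := by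
    rw [← fderiv_comp z (hg _) (hf z), hgf.comp_eq_id, fderiv_id]
  have hdet : (fderiv 𝕜 g (f z)).det * (fderiv 𝕜 f z).det = 1 := by
    rw [ContinuousLinearMap.det, ContinuousLinearMap.det, ← LinearMap.det_comp,
      ← ContinuousLinearMap.toLinearMap_comp, hcomp]
    exact LinearMap.det_id
  exact right_ne_zero_of_mul_eq_one hdet

variable {E : Type*} [NormedAddCommGroup E] [NormedSpace ℂ E]

/-- Two subsets of `E` are holomorphically equivalent if a holomorphic automorphism of `E` maps
the first onto the second; the automorphism is given with its holomorphic inverse. -/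
def HolomorphicallyEquivalent (A B : Set E) : Prop :=
  ∃ φ ψ : E → E, Differentiable ℂ φ ∧ Differentiable ℂ ψ ∧ Function.LeftInverse ψ φ ∧
    Function.RightInverse ψ φ ∧ φ '' A = B

theorem HolomorphicallyEquivalent.equivalence :
    Equivalence (HolomorphicallyEquivalent : Set E → Set E → Prop) where
  refl A := ⟨id, id, differentiable_id, differentiable_id, fun _ => rfl, fun _ => rfl, image_id A⟩
  symm := by
    rintro A _ ⟨φ, ψ, hφ, hψ, hleft, hright, rfl⟩
    exact ⟨ψ, φ, hψ, hφ, hright, hleft, hleft.image_image A⟩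
  trans := by
    rintro A _ _ ⟨φ, ψ, hφ, hψ, hleft, hright, rfl⟩ ⟨φ', ψ', hφ', hψ', hleft', hright', rfl⟩
    exact ⟨φ' ∘ φ, ψ ∘ ψ', hφ'.comp hφ, hψ.comp hψ', hleft'.comp hleft, hright'.comp hright,
      image_comp φ' φ A⟩

variable [FiniteDimensional ℂ E] [Nontrivial E]

theorem exists_infinite_discrete_forall_not_holomorphicallyEquivalent (A : ℕ → Set E)
    (hA : ∀ i, IsClosed (A i) ∧ DiscreteTopology (A i)) :
    ∃ D : Set E, (D.Infinite ∧ IsClosed D ∧ DiscreteTopology D) ∧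
      ∀ i, ¬HolomorphicallyEquivalent (A i) D := by
  have : ProperSpace E := FiniteDimensional.proper ℂ E
  have (x : E) : (𝓝[≠] x).NeBot := Module.punctured_nhds_neBot ℂ E x
  have hAfin (i : ℕ) := (isClosed_and_discreteTopology_iff_finite_inter_closedBall 0).mp (hA i)
  obtain ⟨ε, hε, himage⟩ := exists_radii_closedBall_subset_image E
  let count : ℕ → ℕ → ℕ := fun i k => (A i ∩ closedBall 0 ((k + 1) ^ 2 + 1)).ncard
  let N : ℕ → ℕ := fun k => ∑ i ∈ Finset.range (k + 1), (count i k + 1)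
  have hcountN {i k : ℕ} (hik : i ≤ k) : count i k < N k :=
    Finset.single_le_sum (f := fun i => count i k + 1) (fun _ _ => Nat.zero_le _)
      (Finset.mem_range.mpr (Nat.lt_succ_of_le hik))
  have hkN (k : ℕ) : k < N k := by
    simp only [N, Finset.sum_add_distrib, Finset.sum_const, Finset.card_range, smul_eq_mul]
    omega
  obtain ⟨D, hD, hDN⟩ := exists_discrete_forall_le_ncard_inter_closedBall (0 : E) hε N
  simp only [dist_zero_right] at hDN
  have hinf : D.Infinite := fun hfin => by
    obtain ⟨w, hw⟩ := exists_norm_eq E (c := D.ncard) (Nat.cast_nonneg _)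
    have hle := (hDN D.ncard w hw.ge (by linarith)).trans (ncard_le_ncard inter_subset_left hfin)
    exact hle.not_gt (hkN _)
  refine ⟨D, ⟨hinf, hD⟩, fun i => ?_⟩
  rintro ⟨f, g, hf, hg, hgf, -, rfl⟩
  have hdet := det_fderiv_ne_zero_of_leftInverse hf hg hgf
  obtain ⟨k, ⟨w, hkw, hwk, hw⟩, hik⟩ :=
    ((himage f hf hdet).and_eventually (eventually_ge_atTop i)).exists
  have hle : N k ≤ count i k :=
    calc N k ≤ (f '' A i ∩ closedBall w (ε k)).ncard := hDN k w hkw hwk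
      _ ≤ count i k := ncard_image_inter_le hgf.injective (hAfin i _)
        (hw.trans (image_mono ball_subset_closedBall))
  exact hle.not_gt (hcountN hik)

end Equivalence

universe u

theorem exists_uncountable_pairwise_not_of_countable {X : Type u} {r : X → X → Prop}
    (hr : Equivalence r) (h : ∀ S : Set X, S.Countable → ∃ x, ∀ y ∈ S, ¬r y x) :
    ∃ (I : Type u) (_ : Uncountable I) (x : I → X), Pairwise fun i j => ¬r (x i) (x j) := by
  let s : Setoid X := ⟨r, hr⟩
  have huncountable : Uncountable (Quotient s) := by
    by_contra hcount
    rw [not_uncountable_iff] at hcount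
    obtain ⟨x, hx⟩ := h (range (Quotient.out (s := s))) (countable_range _)
    exact hx _ ⟨Quotient.mk s x, rfl⟩ (Quotient.mk_out x)
  exact ⟨Quotient s, huncountable, Quotient.out, fun i j hij hout =>
    hij (Quotient.out_equiv_out.mp (show i.out ≈ j.out from hout))⟩

theorem stmt_2_general (E : Type u) [NormedAddCommGroup E] [NormedSpace ℂ E] [FiniteDimensional ℂ E]
    [Nontrivial E] :
    ∃ (I : Type u) (_ : Uncountable I) (D : I → Set E),
      (∀ i, (D i).Infinite ∧ IsClosed (D i) ∧ DiscreteTopology (D i)) ∧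
      Pairwise fun i j => ¬HolomorphicallyEquivalent (D i) (D j) := by
  let X := {D : Set E // D.Infinite ∧ IsClosed D ∧ DiscreteTopology D}
  obtain ⟨I, hI, D, hD⟩ := exists_uncountable_pairwise_not_of_countable
    (HolomorphicallyEquivalent.equivalence.comap (Subtype.val : X → Set E)) fun S hS => by
      obtain ⟨A, hA⟩ := ((hS.image Subtype.val).insert ∅).exists_eq_range (insert_nonempty _ _)
      have hAdiscrete (i : ℕ) : IsClosed (A i) ∧ DiscreteTopology (A i) := by
        obtain hi | ⟨D, -, hi⟩ := hA.ge (mem_range_self i)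
        · rw [hi]
          exact ⟨isClosed_empty, inferInstance⟩
        · exact hi ▸ D.2.2
      obtain ⟨D, hD, hne⟩ :=
        exists_infinite_discrete_forall_not_holomorphicallyEquivalent A hAdiscrete
      refine ⟨⟨D, hD⟩, fun B hB => ?_⟩
      obtain ⟨i, hi⟩ := hA.le (mem_insert_of_mem ∅ (mem_image_of_mem _ hB))
      have hnei := hne i
      rwa [hi] at hnei
  exact ⟨I, hI, fun i => (D i).1, fun i => (D i).2, hD⟩

/-- For every integer `n ≥ 1` there exists an uncountable family of infinite discrete subsets of
`ℂⁿ` that are pairwise inequivalent: no automorphism of `ℂⁿ` (bijective holomorphic map with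
holomorphic inverse) maps one of them onto another one. -/
theorem stmt_2 (n : ℕ) (hn : 1 ≤ n) :
    ∃ (I : Type) (_ : Uncountable I) (D : I → Set (EuclideanSpace ℂ (Fin n))),
      (∀ i, (D i).Infinite ∧ IsClosed (D i) ∧ DiscreteTopology (D i)) ∧
      ∀ i j, i ≠ j →
        ¬∃ φ ψ : EuclideanSpace ℂ (Fin n) → EuclideanSpace ℂ (Fin n),
          Differentiable ℂ φ ∧ Differentiable ℂ ψ ∧
          Function.LeftInverse ψ φ ∧ Function.RightInverse ψ φ ∧
          φ '' (D i) = D j := by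
  have : Nonempty (Fin n) := ⟨⟨0, hn⟩⟩
  exact stmt_2_general (EuclideanSpace ℂ (Fin n))
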